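/- arXiv:2411.15449 — 3 statements merged into one kernel-verified Lean document; each statement's English description precedes it below -/
import Mathlib

section
/- Let K be a double complex of R-modules and n ∈ ℤ. Assume: (i) K is n-diagonally bounded-below, i.e., there exists t ∈ ℤ such that K^{i,n−i} = 0 for all i < t; and (ii) for every j ∈ ℤ the j-th row K^{•,j} is exact at horizontal degree n−j, i.e., H^{n−j}(K^{•,j}) = 0. Then the total complex is exact at degree n: H^n(Tot(K)) = 0. -/
/-!
A cycle `x` of total degree `n` has only finitely many nonzero components, and all of them lie in
horizontal degrees `≥ t`. Let `i` be the largest horizontal degree in which `x` has a component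
`a`. The component of `d x` in bidegree `(i + 1, n - i)` is then `h a` alone, so `h a = 0`, and
exactness of the row `n - i` gives `a = h y`. Subtracting the boundary `d y` from `x` removes
`a` and alters only the component in horizontal degree `i - 1`. Since all components vanish in
horizontal degrees `< t`, iterating this finitely many times exhibits `x` as a boundary.

The bookkeeping uses the increasing filtration `totalFiltration K n t N` of `Tot(K)^n` by
horizontal degree `< t + N`. It is exhaustive (`exists_mem_totalFiltration`), and the induction on
`N` is `mem_range_of_mem_totalFiltration`.
-/

open CategoryTheory CategoryTheory.Limits

namespace TotalRows

variable {R : Type} [Ring R]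
  (K : HomologicalComplex₂ (ModuleCat R) (ComplexShape.up ℤ) (ComplexShape.up ℤ))

/-- The part of `Tot(K)^n` spanned by the summands of bidegree `(t + k, n - (t + k))`, for
natural numbers `k < N`. -/
noncomputable def totalFiltration (n t : ℤ) (N : ℕ) :
    Submodule R ((K.total (ComplexShape.up ℤ)).X n) :=
  ⨆ k : ℕ, ⨆ _ : k < N, LinearMap.range
    (K.ιTotal (ComplexShape.up ℤ) (t + k) (n - (t + k)) n (by simp)).hom

lemma ι_mem_totalFiltration {n t : ℤ} (hbdd : ∀ i : ℤ, i < t → IsZero ((K.X i).X (n - i)))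
    {N : ℕ} (i j : ℤ) (h : i + j = n) (hi : i < t + N) (a : (K.X i).X j) :
    (K.ιTotal (ComplexShape.up ℤ) i j n h).hom a ∈ totalFiltration K n t N := by
  obtain rfl : j = n - i := by lia
  by_cases hit : i < t
  · have := ModuleCat.subsingleton_of_isZero (hbdd i hit)
    rw [Subsingleton.elim a 0, map_zero]
    exact zero_mem _
  · obtain ⟨k, rfl⟩ : ∃ k : ℕ, i = t + k := ⟨(i - t).toNat, by lia⟩
    exact Submodule.mem_iSup_of_mem k (Submodule.mem_iSup_of_mem (by lia) ⟨a, rfl⟩)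

lemma totalFiltration_mono (n t : ℤ) : Monotone (totalFiltration K n t) := fun _ _ h =>
  iSup_mono fun _ => iSup_mono' fun hk => ⟨hk.trans_le h, le_rfl⟩

/-- The filtration is exhaustive, because an element of a direct sum has finite support. -/
lemma exists_mem_totalFiltration {n t : ℤ}
    (hbdd : ∀ i : ℤ, i < t → IsZero ((K.X i).X (n - i)))
    (x : (K.total (ComplexShape.up ℤ)).X n) : ∃ N, x ∈ totalFiltration K n t N := by
  rw [← Submodule.mem_iSup_of_directed _ (totalFiltration_mono K n t).directed_le]
  have key : ModuleCat.ofHom (⨆ N, totalFiltration K n t N).mkQ = 0 := by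
    apply HomologicalComplex₂.total.hom_ext
    intro i j h
    ext a
    have : (K.ιTotal (ComplexShape.up ℤ) i j n h).hom a ∈ ⨆ N, totalFiltration K n t N :=
      Submodule.mem_iSup_of_mem (i - t + 1).toNat
        (ι_mem_totalFiltration K hbdd i j h (by lia) a)
    simpa using this
  have := congr($(key).hom x)
  simpa using this

/-- The projection of the total complex onto one of its summands. -/
lemma exists_proj (i j m : ℤ) (h : i + j = m) :
    ∃ p : (K.total (ComplexShape.up ℤ)).X m ⟶ (K.X i).X j,
      K.ιTotal (ComplexShape.up ℤ) i j m h ≫ p = 𝟙 _ ∧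
      ∀ i' j' h', i' ≠ i → K.ιTotal (ComplexShape.up ℤ) i' j' m h' ≫ p = 0 := by
  refine ⟨K.totalDesc (fun i' j' h' => if hi : i' = i then
    (K.XXIsoOfEq _ _ _ hi (by simp at h'; lia)).hom else 0), ?_, ?_⟩
  · simp
  · intro i' j' h' hne
    simp [hne]

lemma ι_d (i j n : ℤ) (h : i + j = n) (a : (K.X i).X j) :
    ((K.total (ComplexShape.up ℤ)).d n (n + 1)).hom
        ((K.ιTotal (ComplexShape.up ℤ) i j n h).hom a) =
      (K.ιTotal (ComplexShape.up ℤ) (i + 1) j (n + 1) (by simp; lia)).hom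
        (((K.d i (i + 1)).f j).hom a) +
      (K.ιTotal (ComplexShape.up ℤ) i (j + 1) (n + 1) (by simp; lia)).hom
        (i.negOnePow • ((K.X i).d j (j + 1)).hom a) := by
  have : K.ιTotal (ComplexShape.up ℤ) i j n h ≫ (K.total (ComplexShape.up ℤ)).d n (n + 1) =
      (K.d i (i + 1)).f j ≫ K.ιTotal (ComplexShape.up ℤ) (i + 1) j (n + 1) (by simp; lia) +
      i.negOnePow • ((K.X i).d j (j + 1) ≫
        K.ιTotal (ComplexShape.up ℤ) i (j + 1) (n + 1) (by simp; lia)) := by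
    rw [HomologicalComplex₂.total_d, Preadditive.comp_add, HomologicalComplex₂.ι_D₁,
      HomologicalComplex₂.ι_D₂, K.d₁_eq _ (i₁' := i + 1) (by simp) _ _ (by simp; lia),
      K.d₂_eq _ _ (i₂' := j + 1) (by simp) _ (by simp; lia)]
    simp
  have := congr($(this).hom a)
  rcases Int.even_or_odd i with hi | hi
  · simpa [Int.negOnePow_even _ hi] using this
  · simpa [Int.negOnePow_odd _ hi] using this

/-- Exactness of the row `j` in elementwise form, with all bidegrees free of subtraction. -/
lemma row_exact {n : ℤ} (hrows : ∀ j : ℤ, (K.flip.X j).ExactAt (n - j))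
    (i j : ℤ) (h : i + 1 + j = n) (a : (K.X (i + 1)).X j)
    (ha : ((K.d (i + 1) (i + 1 + 1)).f j).hom a = 0) :
    ∃ y : (K.X i).X j, ((K.d i (i + 1)).f j).hom y = a := by
  have H := hrows j
  obtain rfl : n = i + 1 + j := h.symm
  rw [add_sub_cancel_right, HomologicalComplex.exactAt_iff' _ i (i + 1) (i + 1 + 1)
    (by simp) (by simp), ShortComplex.moduleCat_exact_iff] at H
  exact H a ha

/-- A cycle in the `N`-th filtration step is a boundary: exactness of one row removes its
component of highest horizontal degree `t + N - 1`. -/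
lemma mem_range_of_mem_totalFiltration {n t : ℤ}
    (hbdd : ∀ i : ℤ, i < t → IsZero ((K.X i).X (n - i)))
    (hrows : ∀ j : ℤ, (K.flip.X j).ExactAt (n - j)) (N : ℕ) :
    ∀ x ∈ totalFiltration K n t N,
      ((K.total (ComplexShape.up ℤ)).d n (n + 1)).hom x = 0 →
      ∃ y, ((K.total (ComplexShape.up ℤ)).d (n - 1) n).hom y = x := by
  induction N with
  | zero =>
    intro x hx _
    refine ⟨0, ?_⟩
    simpa [totalFiltration, eq_comm] using hx
  | succ N ih =>
    intro x hx hdx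
    have hsucc : totalFiltration K n t (N + 1) = totalFiltration K n t N ⊔ LinearMap.range
        (K.ιTotal (ComplexShape.up ℤ) (t + N) (n - (t + N)) n (by simp)).hom :=
      Nat.iSup_lt_succ _ N
    rw [hsucc, Submodule.mem_sup] at hx
    obtain ⟨x', hx', _, ⟨a, rfl⟩, rfl⟩ := hx
    -- Writing the top horizontal degree as `i + 1` keeps the row exactness free of casts.
    obtain ⟨i, hi⟩ : ∃ i : ℤ, t + N = i + 1 := ⟨t + N - 1, by omega⟩
    obtain ⟨j, hj⟩ : ∃ j : ℤ, n - (t + N) = j := ⟨_, rfl⟩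
    have hij : i + 1 + j = n := by omega
    obtain ⟨b, hb⟩ : ∃ b : (K.X (i + 1)).X j,
        (K.ιTotal (ComplexShape.up ℤ) (t + N) (n - (t + N)) n (by simp)).hom a =
          (K.ιTotal (ComplexShape.up ℤ) (i + 1) j n hij).hom b :=
      ⟨(K.XXIsoOfEq _ _ _ hi hj).hom.hom a,
        congr($(K.XXIsoOfEq_hom_ιTotal (ComplexShape.up ℤ) hi hj n hij).hom a).symm⟩
    rw [hb] at hdx ⊢
    obtain ⟨p, hp, hp'⟩ := exists_proj K (i + 1 + 1) j (n + 1) (by omega)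
    have hpx : p.hom (((K.total (ComplexShape.up ℤ)).d n (n + 1)).hom x') = 0 := by
      have hle : totalFiltration K n t N ≤
          LinearMap.ker (p.hom ∘ₗ ((K.total (ComplexShape.up ℤ)).d n (n + 1)).hom) := by
        refine iSup_le fun k => iSup_le fun hk => ?_
        rintro _ ⟨c, rfl⟩
        have h1 := fun c => congr($(hp' (t + k + 1) (n - (t + k)) (by simp; omega) (by omega)).hom c)
        have h2 := fun c => congr($(hp' (t + k) (n - (t + k) + 1) (by simp; omega) (by omega)).hom c)
        simp only [ModuleCat.hom_comp, LinearMap.comp_apply, ModuleCat.hom_zero,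
          LinearMap.zero_apply] at h1 h2
        rw [LinearMap.mem_ker, LinearMap.comp_apply, ι_d, map_add, h1, h2, add_zero]
      exact hle hx'
    have hdb : ((K.d (i + 1) (i + 1 + 1)).f j).hom b = 0 := by
      have h1 := fun c => congr($(hp).hom c)
      have h2 := fun c => congr($(hp' (i + 1) (j + 1) (by simp; omega) (by omega)).hom c)
      simp only [ModuleCat.hom_comp, LinearMap.comp_apply, ModuleCat.hom_zero,
        LinearMap.zero_apply, ModuleCat.hom_id, LinearMap.id_apply] at h1 h2
      have := congrArg p.hom hdx
      rwa [map_add, map_add, hpx, zero_add, map_zero, ι_d, map_add, h1, h2, add_zero] at this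
    obtain ⟨y, rfl⟩ := row_exact K hrows i j hij b hdb
    obtain ⟨m, rfl⟩ : ∃ m : ℤ, n = m + 1 := ⟨n - 1, by omega⟩
    rw [add_sub_cancel_right] at ih ⊢
    have hdy := ι_d K i j m (by omega) y
    set e := (K.ιTotal (ComplexShape.up ℤ) i j m (by simp; omega)).hom y
    have hdd : ((K.total (ComplexShape.up ℤ)).d (m + 1) (m + 1 + 1)).hom
        (((K.total (ComplexShape.up ℤ)).d m (m + 1)).hom e) = 0 :=
      congr($((K.total (ComplexShape.up ℤ)).d_comp_d m (m + 1) (m + 1 + 1)).hom e)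
    obtain ⟨z, hz⟩ := ih (x' - (K.ιTotal (ComplexShape.up ℤ) i (j + 1) (m + 1)
        (by simp; omega)).hom (i.negOnePow • ((K.X i).d j (j + 1)).hom y))
      (sub_mem hx' (ι_mem_totalFiltration K hbdd i (j + 1) (by omega) (by omega) _)) (by
        rw [hdy, map_add] at hdd
        rw [map_add] at hdx
        rw [map_sub, sub_eq_zero]
        exact (eq_neg_of_add_eq_zero_left hdx).trans (neg_eq_of_add_eq_zero_right hdd))
    refine ⟨z + e, ?_⟩
    rw [map_add, hz, hdy]
    abel

end TotalRows

/-- **Proposition 4.1(1) (local acyclic assembly lemma, row version).**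
Let `K` be a double complex of `R`-modules and `n : ℤ`.  If `K` is `n`-diagonally
bounded-below (there is `t` with `K^{i,n−i} = 0` for all `i < t`) and every row
`K^{•,j}` is exact at horizontal degree `n − j`, then the total complex of `K` is
exact at degree `n`. -/
theorem total_exactAt_of_rows_exact
    (R : Type) [Ring R]
    (K : HomologicalComplex₂ (ModuleCat R) (ComplexShape.up ℤ) (ComplexShape.up ℤ))
    (n : ℤ)
    (hbdd : ∃ t : ℤ, ∀ i : ℤ, i < t → IsZero ((K.X i).X (n - i)))
    (hrows : ∀ j : ℤ, (K.flip.X j).ExactAt (n - j)) :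
    (K.total (ComplexShape.up ℤ)).ExactAt n := by
  obtain ⟨t, ht⟩ := hbdd
  rw [HomologicalComplex.exactAt_iff' _ (n - 1) n (n + 1) (by simp) (by simp),
    ShortComplex.moduleCat_exact_iff]
  intro x hx
  obtain ⟨N, hN⟩ := TotalRows.exists_mem_totalFiltration K ht x
  exact TotalRows.mem_range_of_mem_totalFiltration K ht hrows N x hN hx
end

section
/- Let K be a double complex of R-modules and n ∈ ℤ. Assume: (i) K is n-diagonally bounded-above, i.e., there exists t ∈ ℤ such that K^{i,n−i} = 0 for all i > t; and (ii) for every i ∈ ℤ the i-th column K^{i,•} is exact at vertical degree n−i, i.e., H^{n−i}(K^{i,•}) = 0. Then the total complex is exact at degree n: H^n(Tot(K)) = 0. -/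
/-!
The argument is zig-zag elimination along the columns. Filter `Tot(K)^n` by the submodules `F a`
(`colFiltration`) of elements supported in columns `≥ a`. Elements of a direct sum have finite
support, so every element lies in some `F a` (`exists_mem_colFiltration`), and diagonal boundedness
gives `F (t + 1) = 0`.

If `x ∈ F a` is a cocycle, write `x = ι y + z` with `y` in column `a` and `z ∈ F (a + 1)`. The
component of `d x` in column `a` is `± v y`, because `d` never decreases the column index; hence
`v y = 0`, and exactness of column `a` gives `y = v w`. Subtracting `± d (ι w)` from `x` replaces
it by a cohomologous cocycle in `F (a + 1)` (`exists_sub_d_mem`). After finitely many steps the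
cocycle lies in `F (t + 1) = 0`, so `x` is a coboundary.
-/

open CategoryTheory CategoryTheory.Limits

namespace LocalAssembly

variable {R : Type} [Ring R]
  (K : HomologicalComplex₂ (ModuleCat R) (ComplexShape.up ℤ) (ComplexShape.up ℤ))

/-- The inclusion of the summand `K^{p,q}` into `Tot(K)^n`, for `p + q = n`, as a linear map. -/
noncomputable def incl (p q n : ℤ) (h : p + q = n) :
    (K.X p).X q →ₗ[R] (K.total (ComplexShape.up ℤ)).X n :=
  (K.ιTotal (ComplexShape.up ℤ) p q n h).hom

/-- The differential `Tot(K)^n → Tot(K)^m` as a linear map. -/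
noncomputable def totD (n m : ℤ) :
    (K.total (ComplexShape.up ℤ)).X n →ₗ[R] (K.total (ComplexShape.up ℤ)).X m :=
  ((K.total (ComplexShape.up ℤ)).d n m).hom

/-- The total differential on a summand: the horizontal differential plus the vertical one up to
a sign. Only the fact that the sign is a unit matters, so its value is left unspecified. -/
lemma totD_incl (p q q' n m : ℤ) (h : p + q = n) (hq : q + 1 = q') (hm : n + 1 = m) :
    ∃ e : ℤˣ, ∀ y : (K.X p).X q, totD K n m (incl K p q n h y) =
      incl K (p + 1) q m (by lia) ((K.d p (p + 1)).f q y) +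
        (e : ℤ) • incl K p q' m (by lia) ((K.X p).d q q' y) := by
  refine ⟨ComplexShape.ε₂ (ComplexShape.up ℤ) (ComplexShape.up ℤ) (ComplexShape.up ℤ) (p, q),
    fun y => ?_⟩
  have key : K.ιTotal (ComplexShape.up ℤ) p q n h ≫ (K.total (ComplexShape.up ℤ)).d n m =
      (K.d p (p + 1)).f q ≫ K.ιTotal (ComplexShape.up ℤ) (p + 1) q m
        (show p + 1 + q = m by lia) +
      (ComplexShape.ε₂ (ComplexShape.up ℤ) (ComplexShape.up ℤ) (ComplexShape.up ℤ) (p, q) : ℤ) •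
        ((K.X p).d q q' ≫ K.ιTotal (ComplexShape.up ℤ) p q' m (show p + q' = m by lia)) := by
    rw [HomologicalComplex₂.total_d, Preadditive.comp_add, HomologicalComplex₂.ι_D₁,
      HomologicalComplex₂.ι_D₂,
      K.d₁_eq (ComplexShape.up ℤ) (show (ComplexShape.up ℤ).Rel p (p + 1) from rfl) q m
        (show p + 1 + q = m by lia),
      K.d₂_eq (ComplexShape.up ℤ) p (show (ComplexShape.up ℤ).Rel q q' from hq) m
        (show p + q' = m by lia)]
    congr 1
    exact one_smul _ _
  exact congrArg (fun f => f.hom y) key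

open Classical in
/-- The projection of `Tot(K)^m` onto its summand `K^{a,b}`; it is zero
unless `a + b = m`. -/
noncomputable def proj (a b m : ℤ) : (K.total (ComplexShape.up ℤ)).X m →ₗ[R] (K.X a).X b :=
  (K.totalDesc (fun p q _ => if h : p = a ∧ q = b then
    (K.XXIsoOfEq _ _ _ h.1 h.2).hom else 0)).hom

lemma proj_incl_self (a b m : ℤ) (h : a + b = m) (y : (K.X a).X b) :
    proj K a b m (incl K a b m h y) = y := by
  have key := K.ι_totalDesc (c₁₂ := ComplexShape.up ℤ) (fun p q (_ : p + q = m) =>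
    open Classical in if h : p = a ∧ q = b then (K.XXIsoOfEq _ _ _ h.1 h.2).hom else 0) a b h
  rw [dif_pos ⟨rfl, rfl⟩] at key
  exact congrArg (fun f => f.hom y) key

lemma proj_incl_of_ne (a b p q m : ℤ) (h : p + q = m) (hp : p ≠ a) (y : (K.X p).X q) :
    proj K a b m (incl K p q m h y) = 0 := by
  have key := K.ι_totalDesc (c₁₂ := ComplexShape.up ℤ) (fun p q (_ : p + q = m) =>
    open Classical in if h : p = a ∧ q = b then (K.XXIsoOfEq _ _ _ h.1 h.2).hom else 0) p q h
  rw [dif_neg fun h => hp h.1] at key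
  exact congrArg (fun f => f.hom y) key

/-- The elements of `Tot(K)^n` supported in columns `≥ a`. -/
noncomputable def colFiltration (n a : ℤ) : Submodule R ((K.total (ComplexShape.up ℤ)).X n) :=
  ⨆ i : {s : ℤ × ℤ // s.1 + s.2 = n ∧ a ≤ s.1}, LinearMap.range (incl K i.1.1 i.1.2 n i.2.1)

lemma incl_mem (n a p q : ℤ) (h : p + q = n) (hp : a ≤ p) (y : (K.X p).X q) :
    incl K p q n h y ∈ colFiltration K n a :=
  Submodule.mem_iSup_of_mem
    (p := fun i : {s : ℤ × ℤ // s.1 + s.2 = n ∧ a ≤ s.1} =>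
      LinearMap.range (incl K i.1.1 i.1.2 n i.2.1)) ⟨(p, q), h, hp⟩ ⟨y, rfl⟩

lemma colFiltration_le {n a : ℤ} {N : Submodule R ((K.total (ComplexShape.up ℤ)).X n)}
    (hN : ∀ p q (h : p + q = n), a ≤ p → ∀ y, incl K p q n h y ∈ N) :
    colFiltration K n a ≤ N := by
  refine iSup_le ?_
  rintro ⟨⟨p, q⟩, h, hp⟩ _ ⟨y, rfl⟩
  exact hN p q h hp y

lemma colFiltration_anti {n a b : ℤ} (hab : a ≤ b) : colFiltration K n b ≤ colFiltration K n a :=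
  colFiltration_le K fun p q h hp y => incl_mem K n a p q h (hab.trans hp) y

/-- The filtration is exhaustive: the union of its steps is a submodule containing all summands,
and a linear map out of the direct sum is determined by its restrictions to them. -/
lemma exists_mem_colFiltration (n : ℤ) (x : (K.total (ComplexShape.up ℤ)).X n) :
    ∃ a, x ∈ colFiltration K n a := by
  have hdir : Directed (· ≤ ·) (colFiltration K n) := fun a b =>
    ⟨min a b, colFiltration_anti K (min_le_left a b), colFiltration_anti K (min_le_right a b)⟩
  rw [← Submodule.mem_iSup_of_directed _ hdir]
  set N := ⨆ a, colFiltration K n a with hN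
  have hzero : ModuleCat.ofHom N.mkQ = 0 := by
    apply HomologicalComplex₂.total.hom_ext
    intro p q h
    ext y
    have hmem : incl K p q n h y ∈ N :=
      Submodule.mem_iSup_of_mem p (incl_mem K n p p q h le_rfl y)
    simpa [incl] using hmem
  have := congrArg (fun f => f.hom x) hzero
  simpa using this

lemma exists_incl_add (n a b : ℤ) (hab : a + b = n) {x : (K.total (ComplexShape.up ℤ)).X n}
    (hx : x ∈ colFiltration K n a) :
    ∃ y, ∃ z ∈ colFiltration K n (a + 1), incl K a b n hab y + z = x := by
  have hle : colFiltration K n a ≤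
      LinearMap.range (incl K a b n hab) ⊔ colFiltration K n (a + 1) := by
    refine colFiltration_le K fun p q h hp y => ?_
    rcases hp.eq_or_lt with rfl | hlt
    · obtain rfl : q = b := by lia
      exact Submodule.mem_sup_left ⟨y, rfl⟩
    · exact Submodule.mem_sup_right (incl_mem K n _ p q h hlt y)
  obtain ⟨_, ⟨y, rfl⟩, z, hz, hyz⟩ := Submodule.mem_sup.1 (hle hx)
  exact ⟨y, z, hz, hyz⟩

/-- Since `d` does not decrease the column index, `d z` has no component in column `a` when `z` is
supported in columns `> a`. -/
lemma proj_totD_eq_zero (n m a b : ℤ) (hm : n + 1 = m) {z : (K.total (ComplexShape.up ℤ)).X n}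
    (hz : z ∈ colFiltration K n (a + 1)) : proj K a b m (totD K n m z) = 0 := by
  have hle : colFiltration K n (a + 1) ≤ LinearMap.ker (proj K a b m ∘ₗ totD K n m) := by
    refine colFiltration_le K fun p q h hp y => ?_
    obtain ⟨e, he⟩ := totD_incl K p q (q + 1) n m h rfl hm
    rw [LinearMap.mem_ker, LinearMap.comp_apply, he, map_add, map_zsmul,
      proj_incl_of_ne K a b _ _ m _ (by lia), proj_incl_of_ne K a b _ _ m _ (by lia),
      smul_zero, add_zero]
  exact hle hz

/-- The elimination step: a cocycle supported in columns `≥ a` is cohomologous to one supported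
in columns `≥ a + 1`. -/
lemma exists_sub_d_mem (n l m a : ℤ) (hl : l + 1 = n) (hm : n + 1 = m)
    (hcol : (K.X a).ExactAt (n - a)) {x : (K.total (ComplexShape.up ℤ)).X n}
    (hx : x ∈ colFiltration K n a) (hdx : totD K n m x = 0) :
    ∃ w, x - totD K l n w ∈ colFiltration K n (a + 1) := by
  obtain ⟨y, z, hz, rfl⟩ := exists_incl_add K n a (n - a) (by lia) hx
  have hvy : (K.X a).d (n - a) (m - a) y = 0 := by
    obtain ⟨e, he⟩ := totD_incl K a (n - a) (m - a) n m (by lia) (by lia) hm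
    have h0 := congrArg (proj K a (m - a) m) hdx
    rw [map_add, map_add, proj_totD_eq_zero K n m a (m - a) hm hz, he, map_add, map_zsmul,
      proj_incl_of_ne K a (m - a) _ _ m _ (by lia), proj_incl_self, zero_add, add_zero,
      map_zero] at h0
    rcases Int.units_eq_one_or e with rfl | rfl <;> simpa using h0
  rw [HomologicalComplex.exactAt_iff' _ (l - a) (n - a) (m - a)
    (by rw [CochainComplex.prev]; lia) (by rw [CochainComplex.next]; lia),
    ShortComplex.moduleCat_exact_iff] at hcol
  obtain ⟨w, hw⟩ : ∃ w : (K.X a).X (l - a), (K.X a).d (l - a) (n - a) w = y := hcol y hvy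
  obtain ⟨e, he⟩ := totD_incl K a (l - a) (n - a) l n (by lia) (by lia) hl
  refine ⟨(e : ℤ) • incl K a (l - a) l (by lia) w, ?_⟩
  have hee : (e : ℤ) * e = 1 := by
    rcases Int.units_eq_one_or e with rfl | rfl <;> simp
  -- The sign squares to one, so the vertical part of the coboundary is exactly `y`.
  rw [map_zsmul, he, hw, smul_add, smul_smul, hee, one_smul, add_comm _ (incl K a (n - a) n _ y),
    add_sub_add_left_eq_sub]
  exact sub_mem hz (zsmul_mem (incl_mem K n _ _ _ _ le_rfl _) _)

end LocalAssembly

/-- **Proposition 4.1(2) (local acyclic assembly lemma, column version).**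
Let `K` be a double complex of `R`-modules and `n : ℤ`.  If `K` is `n`-diagonally
bounded-above (there is `t` with `K^{i,n−i} = 0` for all `i > t`) and every column
`K^{i,•}` is exact at vertical degree `n − i`, then the total complex of `K` is
exact at degree `n`. -/
theorem total_exactAt_of_columns_exact
    (R : Type) [Ring R]
    (K : HomologicalComplex₂ (ModuleCat R) (ComplexShape.up ℤ) (ComplexShape.up ℤ))
    (n : ℤ)
    (hbdd : ∃ t : ℤ, ∀ i : ℤ, t < i → IsZero ((K.X i).X (n - i)))
    (hcols : ∀ i : ℤ, (K.X i).ExactAt (n - i)) :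
    (K.total (ComplexShape.up ℤ)).ExactAt n := by
  obtain ⟨t, ht⟩ := hbdd
  rw [HomologicalComplex.exactAt_iff' _ (n - 1) n (n + 1)
    (by rw [CochainComplex.prev]) (by rw [CochainComplex.next]),
    ShortComplex.moduleCat_exact_iff]
  -- Induction on the number of columns between the support bound and `t`.
  have main : ∀ (k : ℕ) (x : (K.total (ComplexShape.up ℤ)).X n),
      x ∈ LocalAssembly.colFiltration K n (t + 1 - k) → LocalAssembly.totD K n (n + 1) x = 0 →
      ∃ w, LocalAssembly.totD K (n - 1) n w = x := by
    intro k
    induction k with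
    | zero =>
      intro x hx _
      have hbot : LocalAssembly.colFiltration K n (t + 1 - (0 : ℕ)) ≤ ⊥ := by
        refine LocalAssembly.colFiltration_le K fun p q h hp y => ?_
        obtain rfl : q = n - p := by lia
        have := ModuleCat.subsingleton_of_isZero (ht p (by push_cast at hp; lia))
        rw [Subsingleton.elim y 0, map_zero]
        exact zero_mem _
      exact ⟨0, by rw [map_zero, (Submodule.mem_bot R).1 (hbot hx)]⟩
    | succ k ih =>
      intro x hx hdx
      obtain ⟨w, hw⟩ := LocalAssembly.exists_sub_d_mem K n (n - 1) (n + 1) _ (by lia) rfl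
        (hcols _) hx hdx
      have hdd : LocalAssembly.totD K n (n + 1) (LocalAssembly.totD K (n - 1) n w) = 0 :=
        congrArg (fun f => f.hom w) ((K.total (ComplexShape.up ℤ)).d_comp_d (n - 1) n (n + 1))
      obtain ⟨w', hw'⟩ := ih _
        (by convert hw using 2; push_cast; ring) (by rw [map_sub, hdx, hdd, sub_zero])
      exact ⟨w' + w, by rw [map_add, hw', sub_add_cancel]⟩
  intro x hdx
  obtain ⟨a, ha⟩ := LocalAssembly.exists_mem_colFiltration K n x
  exact main (t + 1 - a).toNat x (LocalAssembly.colFiltration_anti K (by lia) ha) hdx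
end

section
/- Let f : K → L be a morphism of double complexes of R-modules such that for every i ∈ ℤ the i-th column morphism f^{i,•} : K^{i,•} → L^{i,•} is a quasi-isomorphism of cochain complexes. If K and L are diagonally bounded-above (i.e., for every n ∈ ℤ there exists t ∈ ℤ such that K^{i,n−i} = 0 and L^{i,n−i} = 0 for all i > t), then the total morphism Tot(f) : Tot(K) → Tot(L) is a quasi-isomorphism. -/
/-!
A chain map is a quasi-isomorphism iff its mapping cone is acyclic, and the latter says: whenever
`d x = 0` and `φ x = d y`, there are `x'`, `y'` with `d x' = x` and `φ x' - y = d y'`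
(`ConeAcyclic`; the equivalence is `ConeAcyclic.of_quasiIso` and `ConeAcyclic.quasiIso`).

The total complexes are filtered by the submodules `Fil K n p` generated by the columns of index
`≥ p`. The vertical differential preserves the column index and the horizontal one raises it, so
modulo `Fil (p + 1)` the total differential on `Fil p` is, up to the sign `(-1)^p`, the
differential of the `p`-th column. Given a cocycle `(x, y)` of the cone of `Tot(f)` lying in
`Fil p`, its component in the `p`-th column is a cocycle of the cone of `f^{p,•}`, hence a
coboundary; subtracting the corresponding coboundary moves `(x, y)` into `Fil (p + 1)` (`step`).

Elements of a direct sum have finite support, so every `(x, y)` lies in some `Fil p`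
(`exists_mem_Fil`), and diagonal boundedness gives `Fil p = 0` in the two relevant degrees for
large `p` (`Fil_eq_bot`). Hence finitely many steps exhibit `(x, y)` as a coboundary (`descend`).
-/

open CategoryTheory CategoryTheory.Limits

namespace TotalQuasiIso
variable {R : Type} [Ring R]

section cone
variable {M N : CochainComplex (ModuleCat R) ℤ}

/-- Acyclicity of the mapping cone of `φ`, spelled out on elements: every pair `(x, y)` with
`d x = 0` and `φ x = d y` is of the form `(d x', φ x' - d y')`. -/
def ConeAcyclic (φ : M ⟶ N) : Prop :=
  ∀ (k m n : ℤ) (_ : k + 1 = m) (_ : m + 1 = n) (x : M.X n) (y : N.X m),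
    M.d n (n + 1) x = 0 → φ.f n x = N.d m n y →
    ∃ (x' : M.X m) (y' : N.X k), M.d m n x' = x ∧ φ.f m x' - y = N.d k m y'

lemma homologyπ_surj (n : ℤ) : Function.Surjective (M.homologyπ n) :=
  (ModuleCat.epi_iff_surjective _).1 inferInstance

lemma exists_cycle {n : ℤ} (x : M.X n) (hx : M.d n (n + 1) x = 0) :
    ∃ z : M.cycles n, M.iCycles n z = x := by
  have h := (ShortComplex.mk (M.iCycles n) (M.d n (n + 1)) (by simp)).exact_of_f_is_kernel
    (M.cyclesIsKernel n (n + 1) (by simp))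
  exact (ShortComplex.moduleCat_exact_iff _).1 h x hx

lemma d_iCycles {n : ℤ} (z : M.cycles n) (m : ℤ) : M.d n m (M.iCycles n z) = 0 := by
  rw [← ConcreteCategory.comp_apply]; simp

lemma iCycles_inj (n : ℤ) : Function.Injective (M.iCycles n) :=
  (ModuleCat.mono_iff_injective _).1 inferInstance

lemma homologyπ_eq_zero_iff {m n : ℤ} (h : m + 1 = n) (z : M.cycles n) :
    M.homologyπ n z = 0 ↔ ∃ y : M.X m, M.d m n y = M.iCycles n z := by
  have hc (y : M.X m) : M.iCycles n (M.toCycles m n y) = M.d m n y := by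
    rw [← ConcreteCategory.comp_apply]; simp
  constructor
  · intro hz
    have h := (ShortComplex.mk (M.toCycles m n) (M.homologyπ n) (by simp)).exact_of_g_is_cokernel
      (M.homologyIsCokernel m n (by simp [← h]))
    obtain ⟨y, hy⟩ := (ShortComplex.moduleCat_exact_iff _).1 h z hz
    exact ⟨y, by rw [← hc]; exact congrArg _ hy⟩
  · rintro ⟨y, hy⟩
    obtain rfl : M.toCycles m n y = z := iCycles_inj n (by rw [hc, hy])
    rw [← ConcreteCategory.comp_apply]; simp

lemma homologyMap_π (φ : M ⟶ N) {n : ℤ} (z : M.cycles n) :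
    HomologicalComplex.homologyMap φ n (M.homologyπ n z) =
      N.homologyπ n (HomologicalComplex.cyclesMap φ n z) := by
  rw [← ConcreteCategory.comp_apply, ← ConcreteCategory.comp_apply,
    HomologicalComplex.homologyπ_naturality]

lemma iCycles_map (φ : M ⟶ N) {n : ℤ} (z : M.cycles n) :
    N.iCycles n (HomologicalComplex.cyclesMap φ n z) = φ.f n (M.iCycles n z) := by
  rw [← ConcreteCategory.comp_apply, ← ConcreteCategory.comp_apply,
    HomologicalComplex.cyclesMap_i]

lemma map_d (φ : M ⟶ N) (m n : ℤ) (x : M.X m) :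
    φ.f n (M.d m n x) = N.d m n (φ.f m x) := by
  rw [← ConcreteCategory.comp_apply, ← ConcreteCategory.comp_apply, φ.comm]

lemma d_d (k m n : ℤ) (x : M.X k) : M.d m n (M.d k m x) = 0 := by
  rw [← ConcreteCategory.comp_apply]; simp

lemma ConeAcyclic.of_quasiIso (φ : M ⟶ N) [QuasiIso φ] : ConeAcyclic φ := by
  intro k m n hkm hmn x y hx hxy
  obtain ⟨z, rfl⟩ := exists_cycle x hx
  have hz : M.homologyπ n z = 0 := by
    have hinj := (ModuleCat.mono_iff_injective (HomologicalComplex.homologyMap φ n)).1 inferInstance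
    apply hinj
    rw [homologyMap_π, map_zero]
    exact (homologyπ_eq_zero_iff hmn _).2 ⟨y, by rw [iCycles_map, hxy]⟩
  obtain ⟨x₁, hx₁⟩ := (homologyπ_eq_zero_iff hmn _).1 hz
  obtain ⟨w, hw⟩ := exists_cycle (φ.f m x₁ - y) (by
    subst hmn
    rw [map_sub, ← map_d, hx₁, hxy, sub_self])
  -- `x₁` need not match `y`; correct it by a cocycle `z₂` representing the class of `φ x₁ - y`.
  have hsurj := (ModuleCat.epi_iff_surjective (HomologicalComplex.homologyMap φ m)).1 inferInstance
  obtain ⟨c, hc⟩ := hsurj (N.homologyπ m w)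
  obtain ⟨z₂, rfl⟩ := homologyπ_surj m c
  rw [homologyMap_π, eq_comm, ← sub_eq_zero, ← map_sub, homologyπ_eq_zero_iff hkm] at hc
  obtain ⟨y', hy'⟩ := hc
  refine ⟨x₁ - M.iCycles m z₂, y', ?_, ?_⟩
  · rw [map_sub, hx₁, d_iCycles, sub_zero]
  · rw [hy', map_sub, map_sub, iCycles_map, hw]; abel

lemma ConeAcyclic.quasiIso (φ : M ⟶ N) (h : ConeAcyclic φ) : QuasiIso φ := by
  rw [quasiIso_iff]
  intro n
  rw [quasiIsoAt_iff_isIso_homologyMap]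
  have : Mono (HomologicalComplex.homologyMap φ n) := by
    rw [ModuleCat.mono_iff_injective, injective_iff_map_eq_zero]
    intro c hc
    obtain ⟨z, rfl⟩ := homologyπ_surj n c
    rw [homologyMap_π, homologyπ_eq_zero_iff (sub_add_cancel n 1)] at hc
    obtain ⟨y, hy⟩ := hc
    obtain ⟨x', -, hx', -⟩ := h (n - 1 - 1) (n - 1) n (by ring) (by ring) (M.iCycles n z) y
      (d_iCycles _ _) (by rw [hy, iCycles_map])
    exact (homologyπ_eq_zero_iff (sub_add_cancel n 1) _).2 ⟨x', hx'⟩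
  have : Epi (HomologicalComplex.homologyMap φ n) := by
    rw [ModuleCat.epi_iff_surjective]
    intro c
    obtain ⟨w, rfl⟩ := homologyπ_surj n c
    obtain ⟨x', y', hx', hy'⟩ := h (n - 1) n (n + 1) (by ring) rfl 0 (N.iCycles n w)
      (map_zero _) (by rw [d_iCycles, map_zero])
    obtain ⟨z, rfl⟩ := exists_cycle x' hx'
    refine ⟨M.homologyπ n z, ?_⟩
    rw [homologyMap_π, ← sub_eq_zero, ← map_sub, homologyπ_eq_zero_iff (sub_add_cancel n 1)]
    exact ⟨y', by rw [← hy', map_sub, iCycles_map]⟩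
  exact isIso_of_mono_of_epi _

end cone

section filtration
variable (K L : HomologicalComplex₂ (ModuleCat R) (ComplexShape.up ℤ) (ComplexShape.up ℤ))

/-- The total complex of a double complex. -/
noncomputable abbrev Tot : CochainComplex (ModuleCat R) ℤ := K.total (ComplexShape.up ℤ)

/-- The inclusion of the summand `K^{i,j}` into `Tot(K)^n`, for `i + j = n`. -/
noncomputable abbrev inc (i j n : ℤ) (h : i + j = n) : (K.X i).X j ⟶ (Tot K).X n :=
  K.ιTotal (ComplexShape.up ℤ) i j n h

/-- The column filtration: the submodule of `Tot(K)^n` generated by the summands `K^{i,j}` with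
`p ≤ i`. -/
noncomputable def Fil (n p : ℤ) : Submodule R ((Tot K).X n) :=
  ⨆ (i : ℤ) (j : ℤ) (h : i + j = n) (_ : p ≤ i), LinearMap.range (inc K i j n h).hom

variable {K L}

lemma inc_mem {i j n p : ℤ} (h : i + j = n) (hp : p ≤ i) (a : (K.X i).X j) :
    inc K i j n h a ∈ Fil K n p :=
  (le_iSup_of_le i <| le_iSup_of_le j <| le_iSup_of_le h <| le_iSup_of_le hp le_rfl :
    LinearMap.range (inc K i j n h).hom ≤ Fil K n p) ⟨a, rfl⟩

lemma Fil_le {n p : ℤ} {S : Submodule R ((Tot K).X n)}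
    (hS : ∀ (i j : ℤ) (h : i + j = n), p ≤ i → ∀ a, inc K i j n h a ∈ S) : Fil K n p ≤ S := by
  refine iSup_le fun i => iSup_le fun j => iSup_le fun h => iSup_le fun hp => ?_
  rintro _ ⟨a, rfl⟩
  exact hS i j h hp a

lemma Fil_anti (n : ℤ) {p q : ℤ} (h : p ≤ q) : Fil K n q ≤ Fil K n p :=
  Fil_le fun _ _ hij hq a => inc_mem hij (h.trans hq) a

/-- The differential of the total complex on a summand: `h + (-1)^i v`. -/
lemma d_inc (i j n : ℤ) (h : i + j = n) (a : (K.X i).X j) :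
    (Tot K).d n (n + 1) (inc K i j n h a) =
      inc K (i + 1) j (n + 1) (by omega) ((K.d i (i + 1)).f j a) +
      i.negOnePow • inc K i (j + 1) (n + 1) (by omega) ((K.X i).d j (j + 1) a) := by
  have : inc K i j n h ≫ (Tot K).d n (n + 1) =
      (K.d i (i + 1)).f j ≫ inc K (i + 1) j (n + 1) (by omega) +
      i.negOnePow • ((K.X i).d j (j + 1) ≫ inc K i (j + 1) (n + 1) (by omega)) := by
    rw [HomologicalComplex₂.total_d, Preadditive.comp_add, HomologicalComplex₂.ι_D₁,
      HomologicalComplex₂.ι_D₂, K.d₁_eq (ComplexShape.up ℤ) (i₁ := i) (i₁' := i + 1) rfl j (n + 1)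
        (by change i + 1 + j = n + 1; omega),
      K.d₂_eq (ComplexShape.up ℤ) i (i₂ := j) (i₂' := j + 1) rfl (n + 1)
        (by change i + (j + 1) = n + 1; omega)]
    congr 1
    exact one_smul _ _
  have := congrArg (fun g => g.hom a) this
  exact this

/-- The column filtration is exhaustive, because `Tot(K)^n` is generated by its summands. -/
lemma exists_mem_Fil (n : ℤ) (x : (Tot K).X n) : ∃ p, x ∈ Fil K n p := by
  have hdir : Directed (· ≤ ·) (fun q : ℤ => Fil K n (-q)) := fun a b =>
    ⟨max a b, Fil_anti n (by simp), Fil_anti n (by simp)⟩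
  have htop : (⨆ q : ℤ, Fil K n (-q)) = ⊤ := by
    rw [← Submodule.ker_mkQ (⨆ q : ℤ, Fil K n (-q)), LinearMap.ker_eq_top]
    have : ModuleCat.ofHom (Submodule.mkQ (⨆ q : ℤ, Fil K n (-q))) = 0 := by
      apply HomologicalComplex₂.total.hom_ext
      intro i j h
      ext a
      change Submodule.mkQ _ (inc K i j n h a) = 0
      rw [Submodule.mkQ_apply, Submodule.Quotient.mk_eq_zero]
      exact (le_iSup (fun q : ℤ => Fil K n (-q)) (-i)) (inc_mem h (by simp) a)
    exact congrArg ModuleCat.Hom.hom this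
  obtain ⟨q, hq⟩ := (Submodule.mem_iSup_of_directed _ hdir).1 (htop ▸ Submodule.mem_top : x ∈ _)
  exact ⟨_, hq⟩

lemma Fil_eq_bot {n t p : ℤ} (ht : ∀ i : ℤ, t < i → IsZero ((K.X i).X (n - i))) (hp : t < p) :
    Fil K n p = ⊥ := by
  refine eq_bot_iff.2 (Fil_le fun i j h hi a => ?_)
  obtain rfl : j = n - i := by omega
  have := ModuleCat.subsingleton_of_isZero (ht i (by omega))
  rw [Subsingleton.elim a 0, map_zero]
  exact Submodule.zero_mem _

/-- Modulo `Fil (p + 1)`, an element of `Fil p` comes from the `p`-th column. -/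
lemma exists_decomp {n p j : ℤ} (h : p + j = n) {x : (Tot K).X n} (hx : x ∈ Fil K n p) :
    ∃ a : (K.X p).X j, x - inc K p j n h a ∈ Fil K n (p + 1) := by
  have hle : Fil K n p ≤ LinearMap.range (inc K p j n h).hom ⊔ Fil K n (p + 1) := by
    refine Fil_le fun i j' h' hi a => ?_
    rcases hi.eq_or_lt with rfl | hi
    · obtain rfl : j = j' := by omega
      exact Submodule.mem_sup_left ⟨a, rfl⟩
    · exact Submodule.mem_sup_right (inc_mem h' hi a)
  obtain ⟨_, ⟨a, rfl⟩, w, hw, rfl⟩ := Submodule.mem_sup.1 (hle hx)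
  exact ⟨a, by simpa using hw⟩

/-- The `p`-th column meets `Fil (p + 1)` trivially, since the projection onto it kills
`Fil (p + 1)`. -/
lemma eq_zero_of_inc_mem {n p j : ℤ} (h : p + j = n) (a : (K.X p).X j)
    (ha : inc K p j n h a ∈ Fil K n (p + 1)) : a = 0 := by
  let π : (Tot K).X n ⟶ (K.X p).X j := K.totalDesc fun i j' h' =>
    if hi : i = p then (K.XXIsoOfEq _ _ _ hi (by change i + j' = n at h'; omega)).hom else 0
  have hπ : Fil K n (p + 1) ≤ LinearMap.ker π.hom := by
    refine Fil_le fun i j' h' hi b => ?_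
    have : inc K i j' n h' ≫ π = 0 := by
      rw [HomologicalComplex₂.ι_totalDesc, dif_neg (by omega)]
    exact congrArg (fun g => g.hom b) this
  have h1 : inc K p j n h ≫ π = 𝟙 _ := by
    rw [HomologicalComplex₂.ι_totalDesc, dif_pos rfl]; rfl
  have h2 : π.hom (inc K p j n h a) = a := congrArg (fun g => g.hom a) h1
  exact h2.symm.trans (hπ ha)

lemma d_mem {n p : ℤ} {x : (Tot K).X n} (hx : x ∈ Fil K n p) :
    (Tot K).d n (n + 1) x ∈ Fil K (n + 1) p := by
  refine Fil_le (S := (Fil K (n + 1) p).comap ((Tot K).d n (n + 1)).hom) (fun i j h hi a => ?_) hx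
  change (Tot K).d n (n + 1) (inc K i j n h a) ∈ Fil K (n + 1) p
  rw [d_inc]
  exact add_mem (inc_mem _ (by omega) _) (zsmul_mem (inc_mem _ hi _) _)

lemma map_inc (f : K ⟶ L) {i j n : ℤ} (h : i + j = n) (a : (K.X i).X j) :
    (HomologicalComplex₂.total.map f (ComplexShape.up ℤ)).f n (inc K i j n h a) =
      inc L i j n h ((f.f i).f j a) :=
  congrArg (fun g => g.hom a) (HomologicalComplex₂.ιTotal_map K L f (ComplexShape.up ℤ) i j n h)

lemma map_mem (f : K ⟶ L) {n p : ℤ} {x : (Tot K).X n} (hx : x ∈ Fil K n p) :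
    (HomologicalComplex₂.total.map f (ComplexShape.up ℤ)).f n x ∈ Fil L n p := by
  refine Fil_le (S := (Fil L n p).comap
    ((HomologicalComplex₂.total.map f (ComplexShape.up ℤ)).f n).hom) (fun i j h hi a => ?_) hx
  change (HomologicalComplex₂.total.map f (ComplexShape.up ℤ)).f n (inc K i j n h a) ∈ Fil L n p
  rw [map_inc]
  exact inc_mem _ hi _

/-- Modulo `Fil (p + 1)`, the total differential on the `p`-th column is `(-1)^p v`. -/
lemma d_inc_sub_mem {p j n : ℤ} (h : p + j = n) (a : (K.X p).X j) :
    (Tot K).d n (n + 1) (inc K p j n h a) -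
      inc K p (j + 1) (n + 1) (by omega) (p.negOnePow • (K.X p).d j (j + 1) a) ∈
        Fil K (n + 1) (p + 1) := by
  have hs : inc K p (j + 1) (n + 1) (by omega) (p.negOnePow • (K.X p).d j (j + 1) a) =
      p.negOnePow • inc K p (j + 1) (n + 1) (by omega) ((K.X p).d j (j + 1) a) :=
    map_zsmul (inc K p (j + 1) (n + 1) (by omega)).hom _ _
  rw [d_inc, hs, add_sub_cancel_right]
  exact inc_mem _ le_rfl _

/-- A cocycle `(x, y)` of the cone of `Tot(f)` in filtration `p` becomes of filtration `p + 1`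
after subtracting a coboundary, if the cone of `f^{p,•}` is acyclic. -/
lemma step (f : K ⟶ L) (p : ℤ) (hcol : ConeAcyclic (f.f p)) (k : ℤ)
    {x : (Tot K).X (k + 1 + 1)} {y : (Tot L).X (k + 1)}
    (hx : x ∈ Fil K _ p) (hy : y ∈ Fil L _ p)
    (hdx : (Tot K).d (k + 1 + 1) (k + 1 + 1 + 1) x = 0)
    (hxy : (HomologicalComplex₂.total.map f (ComplexShape.up ℤ)).f _ x =
      (Tot L).d (k + 1) (k + 1 + 1) y) :
    ∃ (x' : (Tot K).X (k + 1)) (y' : (Tot L).X k),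
      x - (Tot K).d (k + 1) (k + 1 + 1) x' ∈ Fil K _ (p + 1) ∧
      y - (HomologicalComplex₂.total.map f (ComplexShape.up ℤ)).f _ x' +
        (Tot L).d k (k + 1) y' ∈ Fil L _ (p + 1) := by
  obtain ⟨j, hj⟩ : ∃ j, p + j = k := ⟨k - p, by omega⟩
  set F := HomologicalComplex₂.total.map f (ComplexShape.up ℤ)
  have h1 : p + (j + 1) = k + 1 := by omega
  have h2 : p + (j + 1 + 1) = k + 1 + 1 := by omega
  have h3 : p + (j + 1 + 1 + 1) = k + 1 + 1 + 1 := by omega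
  have hεε : p.negOnePow * p.negOnePow = 1 := Int.units_mul_self _
  obtain ⟨a, ha⟩ := exists_decomp h2 hx
  obtain ⟨b, hb⟩ := exists_decomp h1 hy
  -- `(a, b)` is the component of `(x, y)` in column `p`; up to the sign `(-1)^p` it is a cocycle
  -- of the cone of the column map.
  have hda : (K.X p).d (j + 1 + 1) (j + 1 + 1 + 1) a = 0 := by
    rw [← smul_eq_zero_iff_eq p.negOnePow]
    apply eq_zero_of_inc_mem h3
    have := add_mem (d_mem ha) (d_inc_sub_mem h2 a)
    rw [map_sub, hdx, zero_sub, neg_add_eq_sub, sub_sub_cancel_left, neg_mem_iff] at this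
    exact this
  have hab : (f.f p).f (j + 1 + 1) a =
      (L.X p).d (j + 1) (j + 1 + 1) (p.negOnePow • b) := by
    have hs : (L.X p).d (j + 1) (j + 1 + 1) (p.negOnePow • b) =
      p.negOnePow • (L.X p).d (j + 1) (j + 1 + 1) b := map_zsmul ((L.X p).d _ _).hom _ _
    rw [hs, ← sub_eq_zero]
    apply eq_zero_of_inc_mem h2
    have := add_mem (sub_mem (d_mem hb) (map_mem f ha)) (d_inc_sub_mem h1 b)
    rw [map_sub, map_sub, map_inc, hxy] at this
    rw [map_sub]
    convert this using 1
    abel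
  obtain ⟨a', b', ha', hb'⟩ := hcol j (j + 1) (j + 1 + 1) rfl rfl a _ hda hab
  have hsa : (K.X p).d (j + 1) (j + 1 + 1) (p.negOnePow • a') = p.negOnePow • a := by
    rw [← ha']; exact map_zsmul ((K.X p).d _ _).hom _ _
  have hsf : (f.f p).f (j + 1) (p.negOnePow • a') = p.negOnePow • (f.f p).f (j + 1) a' :=
    map_zsmul ((f.f p).f (j + 1)).hom _ _
  refine ⟨inc K p (j + 1) (k + 1) h1 (p.negOnePow • a'), inc L p j k hj b', ?_, ?_⟩
  · have := sub_mem ha (d_inc_sub_mem h1 (p.negOnePow • a'))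
    rw [hsa, smul_smul, hεε, one_smul] at this
    convert this using 1
    abel
  · have := add_mem hb (d_inc_sub_mem hj b')
    rw [← hb', smul_sub, smul_smul, hεε, one_smul, map_sub] at this
    rw [map_inc, hsf]
    convert this using 1
    abel

/-- A cocycle `(x, y)` of the cone of `Tot(f)` in filtration `p` is a coboundary. The number `m`
bounds how many steps lead to a filtration index where both filtrations vanish. -/
lemma descend (f : K ⟶ L) (hcols : ∀ p, ConeAcyclic (f.f p)) (k s t : ℤ)
    (hs : ∀ i : ℤ, s < i → IsZero ((K.X i).X (k + 1 + 1 - i)))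
    (ht : ∀ i : ℤ, t < i → IsZero ((L.X i).X (k + 1 - i))) (m : ℕ) :
    ∀ (p : ℤ) (_ : s < p + m) (_ : t < p + m)
      (x : (Tot K).X (k + 1 + 1)) (y : (Tot L).X (k + 1))
      (_ : x ∈ Fil K _ p) (_ : y ∈ Fil L _ p)
      (_ : (Tot K).d (k + 1 + 1) (k + 1 + 1 + 1) x = 0)
      (_ : (HomologicalComplex₂.total.map f (ComplexShape.up ℤ)).f _ x =
        (Tot L).d (k + 1) (k + 1 + 1) y),
      ∃ (x' : (Tot K).X (k + 1)) (y' : (Tot L).X k),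
        (Tot K).d (k + 1) (k + 1 + 1) x' = x ∧
        (HomologicalComplex₂.total.map f (ComplexShape.up ℤ)).f _ x' - y =
          (Tot L).d k (k + 1) y' := by
  induction m with
  | zero =>
    intro p hsp htp x y hx hy _ _
    rw [Fil_eq_bot hs (by simpa using hsp), Submodule.mem_bot] at hx
    rw [Fil_eq_bot ht (by simpa using htp), Submodule.mem_bot] at hy
    exact ⟨0, 0, by rw [map_zero, hx], by rw [map_zero, map_zero, hy, sub_zero]⟩
  | succ m ih =>
    intro p hsp htp x y hx hy hdx hxy
    push_cast at hsp htp
    obtain ⟨x₁, y₁, hx₁, hy₁⟩ := step f p (hcols p) k hx hy hdx hxy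
    obtain ⟨x₂, y₂, hx₂, hy₂⟩ := ih (p + 1) (by omega) (by omega) _ _ hx₁ hy₁
      (by rw [map_sub, hdx, d_d, sub_zero])
      (by rw [map_sub, map_add, map_sub, hxy, d_d, add_zero, map_d])
    refine ⟨x₁ + x₂, y₁ + y₂, ?_, ?_⟩
    · rw [map_add, hx₂, add_sub_cancel]
    · rw [map_add, map_add, ← hy₂]
      abel

end filtration
end TotalQuasiIso

/-- **Lemma 4.4.** Let `f : K → L` be a morphism of double complexes of `R`-modules such that
every column morphism `f^{i,•} : K^{i,•} → L^{i,•}` is a quasi-isomorphism.  If `K` and `L`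
are diagonally bounded-above, then the total morphism `Tot(f) : Tot(K) → Tot(L)` is a
quasi-isomorphism. -/
theorem total_map_quasiIso_of_columns_quasiIso
    (R : Type) [Ring R]
    {K L : HomologicalComplex₂ (ModuleCat R) (ComplexShape.up ℤ) (ComplexShape.up ℤ)}
    (f : K ⟶ L)
    (hcols : ∀ i : ℤ, QuasiIso (f.f i))
    (hK : ∀ n : ℤ, ∃ t : ℤ, ∀ i : ℤ, t < i → IsZero ((K.X i).X (n - i)))
    (hL : ∀ n : ℤ, ∃ t : ℤ, ∀ i : ℤ, t < i → IsZero ((L.X i).X (n - i))) :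
    QuasiIso (HomologicalComplex₂.total.map f (ComplexShape.up ℤ)) := by
  apply TotalQuasiIso.ConeAcyclic.quasiIso
  intro k m n hkm hmn x y hdx hxy
  subst hkm hmn
  obtain ⟨s, hs⟩ := hK (k + 1 + 1)
  obtain ⟨t, ht⟩ := hL (k + 1)
  obtain ⟨p, hp⟩ := TotalQuasiIso.exists_mem_Fil _ x
  obtain ⟨q, hq⟩ := TotalQuasiIso.exists_mem_Fil _ y
  exact TotalQuasiIso.descend f (fun i => TotalQuasiIso.ConeAcyclic.of_quasiIso (f.f i)) k s t
    hs ht (max s t + 1 - min p q).toNat (min p q) (by omega) (by omega) x y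
    (TotalQuasiIso.Fil_anti _ (min_le_left p q) hp)
    (TotalQuasiIso.Fil_anti _ (min_le_right p q) hq) hdx hxy
end
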